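/- (Jacobi triple product, in the form of the paper's infinite product expansion of θ₁₁.) For every q ∈ ℂ with 0 < |q| < 1 and every z ∈ ℂ with z ≠ 0, one has F(z;q) = (q;q)_∞ · (z^{−1};q)_∞ · (qz;q)_∞, i.e. ∑_{n∈ℤ} (−1)^n q^{n(n+1)/2} z^n = ∏_{n=1}^∞ (1 − qⁿ) · ∏_{n=0}^∞ (1 − z^{−1} qⁿ) · ∏_{n=0}^∞ (1 − z q^{n+1}). -/

import Mathlib

/-- The reduced Jacobi theta function `F(z;q) = ∑_{n ∈ ℤ} (-1)^n q^{n(n+1)/2} z^n`. -/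
noncomputable def F (q z : ℂ) : ℂ :=
  ∑' n : ℤ, (-1 : ℂ) ^ n * q ^ (n * (n + 1) / 2) * z ^ n

/-!
Cauchy's finite form of the triple product,
`∑ₙ (-1)ⁿ q^{n(n+1)/2} zⁿ [M+N choose M+n]_q = (z⁻¹;q)_M (zq;q)_N`,
follows by adjoining one factor at a time: a new factor on either side amounts to one of the two
`q`-Pascal rules. As `M = N → ∞`, the Gaussian binomials stay bounded and tend to `1 / (q;q)_∞`, so
dominated convergence yields the infinite identity.
-/

open Filter Topology

section Algebra

/-- The finite `q`-Pochhammer symbol `(a;q)_n`, whose limit `(a;q)_∞` gives the three products. -/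
def qPochhammer {R : Type*} [CommRing R] (a q : R) (n : ℕ) : R :=
  ∏ k ∈ Finset.range n, (1 - a * q ^ k)

lemma qPochhammer_succ {R : Type*} [CommRing R] (a q : R) (n : ℕ) :
    qPochhammer a q (n + 1) = qPochhammer a q n * (1 - a * q ^ n) :=
  Finset.prod_range_succ _ _

variable {K : Type*} [Field K] {q z : K}

/-- The reciprocal `1 / (q;q)_k`, extended by zero to negative `k` so that the recurrence
`qPochhammerInv_sub_one` holds for every integer. -/
def qPochhammerInv (q : K) : ℤ → K
  | (k : ℕ) => (qPochhammer q q k)⁻¹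
  | Int.negSucc _ => 0

/-- The Gaussian binomial coefficient `[m choose k]_q = (q;q)_m / ((q;q)_k (q;q)_{m-k})`, equal to
zero unless `0 ≤ k ≤ m`. If `q` is a root of unity, the quotient may be a division by zero and its
value need not be that of the usual polynomial in `q`. -/
def gaussBinom (q : K) (m : ℕ) (k : ℤ) : K :=
  qPochhammer q q m * (qPochhammerInv q k * qPochhammerInv q (m - k))

/-- The `n`-th term `(-1)ⁿ q^{n(n+1)/2} zⁿ` of the reduced theta series. The integer division in the
exponent is exact. -/
def qThetaTerm (q z : K) (n : ℤ) : K :=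
  (-1) ^ n * q ^ (n * (n + 1) / 2) * z ^ n

lemma one_sub_self_mul_pow_ne_zero (hq : ¬IsOfFinOrder q) (k : ℕ) : 1 - q * q ^ k ≠ 0 := by
  rw [← pow_succ', sub_ne_zero]
  exact fun h ↦ hq (isOfFinOrder_iff_pow_eq_one.mpr ⟨k + 1, k.succ_pos, h.symm⟩)

lemma qPochhammerInv_natCast (q : K) (k : ℕ) : qPochhammerInv q k = (qPochhammer q q k)⁻¹ :=
  rfl

lemma qPochhammerInv_of_neg (q : K) : ∀ {k : ℤ}, k < 0 → qPochhammerInv q k = 0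
  | Int.negSucc _, _ => rfl

lemma qPochhammerInv_sub_one (hq : ¬IsOfFinOrder q) (k : ℤ) :
    qPochhammerInv q (k - 1) = (1 - q ^ k) * qPochhammerInv q k := by
  rcases lt_trichotomy k 0 with hk | rfl | hk
  · rw [qPochhammerInv_of_neg q hk, qPochhammerInv_of_neg q (by omega), mul_zero]
  · rw [qPochhammerInv_of_neg q (by omega), zpow_zero, sub_self, zero_mul]
  · obtain ⟨j, rfl⟩ : ∃ j : ℕ, k = j + 1 := ⟨(k - 1).toNat, by omega⟩
    rw [add_sub_cancel_right, ← Nat.cast_succ, zpow_natCast, pow_succ', qPochhammerInv_natCast,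
      qPochhammerInv_natCast, qPochhammer_succ, mul_inv_rev,
      mul_inv_cancel_left₀ (one_sub_self_mul_pow_ne_zero hq j)]

lemma gaussBinom_zero_left (q : K) (k : ℤ) : gaussBinom q 0 k = if k = 0 then 1 else 0 := by
  rw [gaussBinom, Nat.cast_zero, zero_sub]
  rcases lt_trichotomy k 0 with hk | rfl | hk
  · rw [qPochhammerInv_of_neg q hk, if_neg hk.ne, zero_mul, mul_zero]
  · have hone : qPochhammerInv q 0 = 1 := by
      simpa [qPochhammer] using qPochhammerInv_natCast q 0
    simp [qPochhammer, hone]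
  · rw [qPochhammerInv_of_neg q (neg_lt_zero.mpr hk), if_neg hk.ne', mul_zero, mul_zero]

lemma gaussBinom_succ (hq₀ : q ≠ 0) (hq : ¬IsOfFinOrder q) (m : ℕ) (k : ℤ) :
    gaussBinom q (m + 1) k
      = gaussBinom q m k + q ^ (m + 1 - k : ℤ) * gaussBinom q m (k - 1) := by
  have hk : (m : ℤ) - k = m + 1 - k - 1 := by ring
  have hk' : (m : ℤ) - (k - 1) = m + 1 - k := by ring
  have hpow : q * q ^ m = q ^ (m + 1 - k : ℤ) * q ^ k := by
    rw [← zpow_add₀ hq₀, sub_add_cancel, ← pow_succ', ← zpow_natCast, Nat.cast_succ]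
  rw [gaussBinom, gaussBinom, gaussBinom, hk, hk', qPochhammerInv_sub_one hq,
    qPochhammerInv_sub_one hq, qPochhammer_succ, hpow, Nat.cast_succ]
  ring

lemma gaussBinom_succ' (hq₀ : q ≠ 0) (hq : ¬IsOfFinOrder q) (m : ℕ) (k : ℤ) :
    gaussBinom q (m + 1) k = gaussBinom q m (k - 1) + q ^ k * gaussBinom q m k := by
  have hsymm (m : ℕ) (k : ℤ) : gaussBinom q m (m - k) = gaussBinom q m k := by
    rw [gaussBinom, gaussBinom, sub_sub_cancel, mul_comm (qPochhammerInv q k)]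
  have h := gaussBinom_succ hq₀ hq m ((m + 1 : ℕ) - k)
  have hk : ((m + 1 : ℕ) : ℤ) - k = m - (k - 1) := by push_cast; ring
  have hk' : (m : ℤ) - (k - 1) - 1 = m - k := by ring
  have hk'' : (m : ℤ) + 1 - (m - (k - 1)) = k := by ring
  rwa [hsymm, hk, hsymm, hk', hsymm, hk''] at h

lemma qThetaTerm_add_one (hq₀ : q ≠ 0) (hz : z ≠ 0) (n : ℤ) :
    qThetaTerm q z (n + 1) = -(q ^ (n + 1) * z) * qThetaTerm q z n := by
  have hexp : (n + 1) * (n + 1 + 1) / 2 = n * (n + 1) / 2 + (n + 1) := by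
    rw [← Int.add_mul_ediv_right _ _ two_ne_zero]
    ring_nf
  rw [qThetaTerm, qThetaTerm, hexp, zpow_add₀ hq₀, zpow_add_one₀ hz,
    zpow_add_one₀ (neg_ne_zero.mpr one_ne_zero)]
  ring

lemma qThetaTerm_neg (hq₀ : q ≠ 0) (z : K) (n : ℤ) :
    qThetaTerm q z (-n) = qThetaTerm q (q * z)⁻¹ n := by
  have hexp : -n * (-n + 1) / 2 = n * (n + 1) / 2 + -n := by
    rw [← Int.add_mul_ediv_right _ _ two_ne_zero]
    ring_nf
  have hsign : (-1 : K) ^ (-n) = (-1) ^ n := by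
    rw [zpow_neg, ← inv_zpow, inv_neg_one]
  rw [qThetaTerm, qThetaTerm, hexp, hsign, zpow_add₀ hq₀, inv_zpow', mul_zpow]
  ring

end Algebra

section FiniteTripleProduct

variable {K : Type*} [Field K] [TopologicalSpace K] [IsTopologicalRing K] {q z : K}

lemma hasSum_qThetaTerm_mul_gaussBinom_succ_right (hq₀ : q ≠ 0) (hq : ¬IsOfFinOrder q)
    (hz : z ≠ 0) {M N : ℕ} {s : K}
    (hs : HasSum (fun n : ℤ ↦ qThetaTerm q z n * gaussBinom q (M + N) (M + n)) s) :
    HasSum (fun n : ℤ ↦ qThetaTerm q z n * gaussBinom q (M + (N + 1)) (M + n))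
      (s * (1 - z * q * q ^ N)) := by
  have hshift := (Equiv.subRight (1 : ℤ)).hasSum_iff.mpr hs
  rw [mul_one_sub, mul_comm s]
  refine (hs.sub (hshift.mul_left (z * q * q ^ N))).congr_fun fun n ↦ ?_
  have hθ := qThetaTerm_add_one hq₀ hz (n - 1)
  rw [sub_add_cancel] at hθ
  have hpow : q * q ^ N = q ^ ((M + N : ℕ) + 1 - (M + n) : ℤ) * q ^ n := by
    rw [← zpow_add₀ hq₀, ← pow_succ', ← zpow_natCast]
    congr 1
    push_cast
    ring
  simp only [Function.comp_apply, Equiv.subRight_apply]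
  rw [← add_assoc M, gaussBinom_succ hq₀ hq, mul_assoc z, hpow, hθ, ← add_sub_assoc]
  ring

lemma hasSum_qThetaTerm_mul_gaussBinom_succ_left (hq₀ : q ≠ 0) (hq : ¬IsOfFinOrder q)
    (hz : z ≠ 0) {M N : ℕ} {s : K}
    (hs : HasSum (fun n : ℤ ↦ qThetaTerm q z n * gaussBinom q (M + N) (M + n)) s) :
    HasSum (fun n : ℤ ↦ qThetaTerm q z n * gaussBinom q (M + 1 + N) ((M + 1 : ℕ) + n))
      (s * (1 - z⁻¹ * q ^ M)) := by
  have hshift := (Equiv.addRight (1 : ℤ)).hasSum_iff.mpr hs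
  rw [mul_one_sub, mul_comm s]
  refine (hs.sub (hshift.mul_left (z⁻¹ * q ^ M))).congr_fun fun n ↦ ?_
  have hpow : q ^ (M + (n + 1) : ℤ) = q ^ M * q ^ (n + 1) := by
    rw [zpow_add₀ hq₀, zpow_natCast]
  have hidx : ((M + 1 : ℕ) : ℤ) + n = M + (n + 1) := by push_cast; ring
  simp only [Function.comp_apply, Equiv.coe_addRight]
  rw [add_right_comm M, gaussBinom_succ' hq₀ hq, hidx, hpow, qThetaTerm_add_one hq₀ hz,
    ← add_assoc, add_sub_cancel_right]
  field_simp
  ring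

theorem hasSum_qThetaTerm_mul_gaussBinom (hq₀ : q ≠ 0) (hq : ¬IsOfFinOrder q) (hz : z ≠ 0)
    (M N : ℕ) :
    HasSum (fun n : ℤ ↦ qThetaTerm q z n * gaussBinom q (M + N) (M + n))
      (qPochhammer z⁻¹ q M * qPochhammer (z * q) q N) := by
  induction M with
  | zero =>
    induction N with
    | zero =>
      convert hasSum_ite_eq (0 : ℤ) (1 : K) using 2 with n
      · rw [add_zero, Nat.cast_zero, zero_add, gaussBinom_zero_left]
        split_ifs with hn
        · simp [hn, qThetaTerm]
        · rw [mul_zero]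
      · simp [qPochhammer]
    | succ N ih =>
      rw [qPochhammer_succ, ← mul_assoc]
      exact hasSum_qThetaTerm_mul_gaussBinom_succ_right hq₀ hq hz ih
  | succ M ih =>
    rw [qPochhammer_succ, mul_right_comm]
    exact hasSum_qThetaTerm_mul_gaussBinom_succ_left hq₀ hq hz ih

end FiniteTripleProduct

section Limit

variable {𝕜 : Type*} [NormedField 𝕜] {q z : 𝕜}

lemma not_isOfFinOrder_of_norm_lt_one (hq : ‖q‖ < 1) : ¬IsOfFinOrder q :=
  fun h ↦ hq.ne h.norm_eq_one

lemma summable_norm_qThetaTerm_natCast (hq₀ : q ≠ 0) (hq : ‖q‖ < 1) (hz : z ≠ 0) :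
    Summable fun n : ℕ ↦ ‖qThetaTerm q z n‖ := by
  have hratio : Tendsto (fun n : ℕ ↦ ‖q ^ (n + 1) * z‖) atTop (𝓝 0) := by
    simpa using (((tendsto_pow_atTop_nhds_zero_of_norm_lt_one hq).comp
      (tendsto_add_atTop_nat 1)).mul_const z).norm
  refine summable_of_ratio_norm_eventually_le one_half_lt_one ?_
  filter_upwards [hratio.eventually_le_const one_half_pos] with n hn
  rw [norm_norm, norm_norm, Nat.cast_succ, qThetaTerm_add_one hq₀ hz, norm_mul, norm_neg,
    ← Nat.cast_succ, zpow_natCast]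
  gcongr

lemma summable_norm_qThetaTerm (hq₀ : q ≠ 0) (hq : ‖q‖ < 1) (hz : z ≠ 0) :
    Summable fun n : ℤ ↦ ‖qThetaTerm q z n‖ := by
  refine .of_nat_of_neg (summable_norm_qThetaTerm_natCast hq₀ hq hz) ?_
  simp only [qThetaTerm_neg hq₀]
  exact summable_norm_qThetaTerm_natCast hq₀ hq (inv_ne_zero (mul_ne_zero hq₀ hz))

lemma summable_norm_mul_pow (a : 𝕜) (hq : ‖q‖ < 1) : Summable fun n : ℕ ↦ ‖-(a * q ^ n)‖ := by
  simpa using (summable_geometric_of_lt_one (norm_nonneg q) hq).mul_left ‖a‖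

variable [CompleteSpace 𝕜]

lemma multipliable_one_sub_mul_pow (a : 𝕜) (hq : ‖q‖ < 1) :
    Multipliable fun n : ℕ ↦ 1 - a * q ^ n := by
  simpa only [← sub_eq_add_neg] using multipliable_one_add_of_summable (summable_norm_mul_pow a hq)

lemma tendsto_qPochhammer (a : 𝕜) (hq : ‖q‖ < 1) :
    Tendsto (qPochhammer a q) atTop (𝓝 (∏' n : ℕ, (1 - a * q ^ n))) :=
  (multipliable_one_sub_mul_pow a hq).tendsto_prod_tprod_nat

lemma tprod_one_sub_mul_pow_ne_zero {a : 𝕜} (hq : ‖q‖ < 1) (ha : ∀ n : ℕ, 1 - a * q ^ n ≠ 0) :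
    ∏' n : ℕ, (1 - a * q ^ n) ≠ 0 := by
  simp only [sub_eq_add_neg] at ha ⊢
  exact tprod_one_add_ne_zero_of_summable ha (summable_norm_mul_pow a hq)

lemma tprod_one_sub_mul_pow_self_ne_zero (hq : ‖q‖ < 1) : ∏' n : ℕ, (1 - q * q ^ n) ≠ 0 :=
  tprod_one_sub_mul_pow_ne_zero hq
    (one_sub_self_mul_pow_ne_zero (not_isOfFinOrder_of_norm_lt_one hq))

lemma tendsto_inv_qPochhammer (hq : ‖q‖ < 1) :
    Tendsto (fun n ↦ (qPochhammer q q n)⁻¹) atTop (𝓝 (∏' n : ℕ, (1 - q * q ^ n))⁻¹) :=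
  (tendsto_qPochhammer q hq).inv₀ (tprod_one_sub_mul_pow_self_ne_zero hq)

lemma tendsto_qPochhammerInv (hq : ‖q‖ < 1) :
    Tendsto (qPochhammerInv q) atTop (𝓝 (∏' n : ℕ, (1 - q * q ^ n))⁻¹) := by
  rw [← Nat.map_cast_int_atTop, tendsto_map'_iff]
  exact tendsto_inv_qPochhammer hq

lemma exists_norm_qPochhammerInv_le (hq : ‖q‖ < 1) : ∃ C, ∀ k, ‖qPochhammerInv q k‖ ≤ C := by
  obtain ⟨C, hC⟩ := (tendsto_inv_qPochhammer hq).norm.bddAbove_range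
  refine ⟨C, fun k ↦ ?_⟩
  rcases lt_or_ge k 0 with hk | hk
  · rw [qPochhammerInv_of_neg q hk, norm_zero]
    exact (norm_nonneg _).trans (hC ⟨0, rfl⟩)
  · lift k to ℕ using hk
    exact hC ⟨k, rfl⟩

lemma exists_norm_gaussBinom_le (hq : ‖q‖ < 1) : ∃ C, ∀ m k, ‖gaussBinom q m k‖ ≤ C := by
  obtain ⟨A, hA⟩ := (tendsto_qPochhammer q hq).norm.bddAbove_range
  obtain ⟨B, hB⟩ := exists_norm_qPochhammerInv_le hq
  refine ⟨A * (B * B), fun m k ↦ ?_⟩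
  have hA' : ‖qPochhammer q q m‖ ≤ A := hA ⟨m, rfl⟩
  have hA₀ : 0 ≤ A := (norm_nonneg _).trans hA'
  have hB₀ : 0 ≤ B := (norm_nonneg _).trans (hB 0)
  rw [gaussBinom, norm_mul, norm_mul]
  gcongr <;> apply hB

lemma tendsto_gaussBinom_central (hq : ‖q‖ < 1) (n : ℤ) :
    Tendsto (fun N : ℕ ↦ gaussBinom q (N + N) (N + n)) atTop
      (𝓝 (∏' n : ℕ, (1 - q * q ^ n))⁻¹) := by
  have hupper : Tendsto (fun N : ℕ ↦ N + N) atTop atTop := tendsto_id.atTop_add_atTop tendsto_id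
  have hlower (j : ℤ) : Tendsto (fun N : ℕ ↦ (N : ℤ) + j) atTop atTop :=
    tendsto_atTop_add_const_right _ j tendsto_natCast_atTop_atTop
  have hlim := ((tendsto_qPochhammer q hq).comp hupper).mul
    (((tendsto_qPochhammerInv hq).comp (hlower n)).mul
      ((tendsto_qPochhammerInv hq).comp (hlower (-n))))
  rw [mul_inv_cancel_left₀ (tprod_one_sub_mul_pow_self_ne_zero hq)] at hlim
  refine hlim.congr fun N ↦ ?_
  have hdiff : ((N + N : ℕ) : ℤ) - (N + n) = N + -n := by push_cast; ring
  simp only [Function.comp_apply, gaussBinom, hdiff]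

theorem hasSum_qThetaTerm (hq₀ : q ≠ 0) (hq : ‖q‖ < 1) (hz : z ≠ 0) :
    HasSum (qThetaTerm q z) ((∏' n : ℕ, (1 - q * q ^ n)) * (∏' n : ℕ, (1 - z⁻¹ * q ^ n)) *
      ∏' n : ℕ, (1 - z * q * q ^ n)) := by
  have hsum := summable_norm_qThetaTerm hq₀ hq hz
  obtain ⟨C, hC⟩ := exists_norm_gaussBinom_le hq
  have hseries := tendsto_tsum_of_dominated_convergence (hsum.mul_right C)
    (fun n ↦ (tendsto_gaussBinom_central hq n).const_mul (qThetaTerm q z n))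
    (.of_forall fun N n ↦ (norm_mul _ _).trans_le (by gcongr; apply hC))
  have hproduct := (tendsto_qPochhammer z⁻¹ hq).mul (tendsto_qPochhammer (z * q) hq)
  have hfinite (N : ℕ) := (hasSum_qThetaTerm_mul_gaussBinom hq₀
    (not_isOfFinOrder_of_norm_lt_one hq) hz N N).tsum_eq
  have hlim := tendsto_nhds_unique (hseries.congr hfinite) hproduct
  rw [tsum_mul_right, ← div_eq_mul_inv,
    div_eq_iff (tprod_one_sub_mul_pow_self_ne_zero hq)] at hlim
  rw [mul_assoc, mul_comm, ← hlim]
  exact hsum.of_norm.hasSum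

end Limit

theorem stmt2_general {𝕜 : Type*} [NormedField 𝕜] [CompleteSpace 𝕜] {q z : 𝕜} (hq₀ : q ≠ 0)
    (hq : ‖q‖ < 1) (hz : z ≠ 0) :
    (Multipliable fun n : ℕ ↦ 1 - q ^ (n + 1)) ∧
    (Multipliable fun n : ℕ ↦ 1 - z⁻¹ * q ^ n) ∧
    (Multipliable fun n : ℕ ↦ 1 - z * q ^ (n + 1)) ∧
    HasSum (fun n : ℤ ↦ (-1) ^ n * q ^ (n * (n + 1) / 2) * z ^ n)
      ((∏' n : ℕ, (1 - q ^ (n + 1))) * (∏' n : ℕ, (1 - z⁻¹ * q ^ n)) *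
        ∏' n : ℕ, (1 - z * q ^ (n + 1))) := by
  simp only [pow_succ', ← mul_assoc]
  exact ⟨multipliable_one_sub_mul_pow q hq, multipliable_one_sub_mul_pow z⁻¹ hq,
    multipliable_one_sub_mul_pow (z * q) hq, hasSum_qThetaTerm hq₀ hq hz⟩

/-- Jacobi triple product:
`F(z;q) = ∏_{n≥1}(1-qⁿ) · ∏_{n≥0}(1-z⁻¹qⁿ) · ∏_{n≥0}(1-zq^{n+1})`,
all three infinite products being convergent. -/
theorem stmt2 (q : ℂ) (hq0 : 0 < ‖q‖) (hq1 : ‖q‖ < 1) (z : ℂ) (hz : z ≠ 0) :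
    (Multipliable fun n : ℕ => 1 - q ^ (n + 1)) ∧
    (Multipliable fun n : ℕ => 1 - z⁻¹ * q ^ n) ∧
    (Multipliable fun n : ℕ => 1 - z * q ^ (n + 1)) ∧
    F q z = (∏' n : ℕ, (1 - q ^ (n + 1))) * (∏' n : ℕ, (1 - z⁻¹ * q ^ n)) *
        ∏' n : ℕ, (1 - z * q ^ (n + 1)) := by
  obtain ⟨hmul₁, hmul₂, hmul₃, hsum⟩ := stmt2_general (norm_pos_iff.mp hq0) hq1 hz
  exact ⟨hmul₁, hmul₂, hmul₃, hsum.tsum_eq⟩
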